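/- Let (H,A,C) be a Doi-Hopf datum. The assignments γ ↦ ψ_γ, where ψ_γ(c⊗a) = a·γ(c), and ψ ↦ γ_ψ, where γ_ψ(c) = ψ(c⊗1_A), are mutually inverse bijections between the set V_4 of A-integrals for (H,A,C) and the set V_5; moreover γ is total if and only if ψ_γ is normalized. -/

import Mathlib

/-!
Everything rests on the formula `ψ_γ(c ⊗ a) = a·γ(c)` (`toV5_tmul`) and on the left action of `A`
on `Hom(C, A)` being unital, associative and commuting with the right action. Left linearity of
`ψ_γ` is then associativity of that action, while condition (a) says exactly that
`ψ_γ((c ⊗ 1)·a) = γ(c)·a` (`toV5_rActCA`), from which right linearity on all of `C ⊗ A` follows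
because `c ⊗ b = b·(c ⊗ 1)`. Condition (b) and the normalization only involve `c ↦ ψ(c ⊗ 1)`,
so they transfer along `γ_{ψ_γ} = γ`, and `ψ_{γ_ψ} = ψ` is left linearity of `ψ`.
-/

open TensorProduct

noncomputable section

/-- A Doi-Hopf datum `(H, A, C)`: `H` is a `k`-bialgebra, `A` is a left `H`-comodule
algebra (with coaction `ρ`), and `C` is a right `H`-module coalgebra (with action `act`). -/
structure DoiHopfDatum (k H A C : Type*) [CommRing k] [Ring H] [Bialgebra k H]
    [Ring A] [Algebra k A] [AddCommGroup C] [Module k C] [Coalgebra k C] where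
  /-- the coaction `ρ_A : A → H ⊗ A`, `ρ a = Σ a_{<-1>} ⊗ a_{<0>}` -/
  ρ : A →ₗ[k] H ⊗[k] A
  ρ_coassoc : ∀ a : A,
    (TensorProduct.assoc k H H A)
        ((TensorProduct.map (Coalgebra.comul (R := k)) LinearMap.id) (ρ a))
      = (TensorProduct.map LinearMap.id ρ) (ρ a)
  ρ_counit : ∀ a : A,
    (TensorProduct.lid k A)
        ((TensorProduct.map (Coalgebra.counit (R := k)) LinearMap.id) (ρ a)) = a
  ρ_mul : ∀ a b : A, ρ (a * b) = ρ a * ρ b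
  ρ_one : ρ 1 = 1
  /-- the right `H`-action on `C`, written `act c h = c · h` -/
  act : C →ₗ[k] H →ₗ[k] C
  act_one : ∀ c : C, act c 1 = c
  act_mul : ∀ (c : C) (g h : H), act (act c g) h = act c (g * h)
  comul_act : ∀ (c : C) (h : H),
    Coalgebra.comul (R := k) (act c h)
      = (TensorProduct.map (TensorProduct.lift act) (TensorProduct.lift act))
          ((TensorProduct.tensorTensorTensorComm k C C H H)
            (Coalgebra.comul (R := k) c ⊗ₜ[k] Coalgebra.comul (R := k) h))
  counit_act : ∀ (c : C) (h : H),
    Coalgebra.counit (R := k) (act c h)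
      = Coalgebra.counit (R := k) c * Coalgebra.counit (R := k) h

namespace DoiHopfDatum

variable {k H A C : Type*} [CommRing k] [Ring H] [Bialgebra k H]
    [Ring A] [Algebra k A] [AddCommGroup C] [Module k C] [Coalgebra k C]
variable (D : DoiHopfDatum k H A C)

/-- The action `C ⊗ H → C` as a linear map on the tensor product. -/
def actL : C ⊗[k] H →ₗ[k] C := TensorProduct.lift D.act

/-- The iterated coaction `a ↦ Σ (a_{<-2>} ⊗ a_{<-1>}) ⊗ a_{<0>}`. -/
def ρ2 : A →ₗ[k] (H ⊗[k] H) ⊗[k] A :=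
  (TensorProduct.assoc k H H A).symm.toLinearMap ∘ₗ
    (TensorProduct.map LinearMap.id D.ρ) ∘ₗ D.ρ

/-- The simultaneous action of `H ⊗ H` on `C ⊗ C`. -/
def act2 : (C ⊗[k] C) ⊗[k] (H ⊗[k] H) →ₗ[k] C ⊗[k] C :=
  (TensorProduct.map D.actL D.actL) ∘ₗ
    (TensorProduct.tensorTensorTensorComm k C C H H).toLinearMap

/-- The right `A`-action on `C ⊗ A`: `(c ⊗ b) · a = Σ c·a_{<-1>} ⊗ b·a_{<0>}`. -/
def rActCA : (C ⊗[k] A) ⊗[k] A →ₗ[k] C ⊗[k] A :=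
  (TensorProduct.map D.actL (LinearMap.mul' k A)) ∘ₗ
    (TensorProduct.tensorTensorTensorComm k C A H A).toLinearMap ∘ₗ
    (TensorProduct.map LinearMap.id D.ρ)

/-- The right-hand side of condition (a) of `V₃`:
`(c ⊗ d) ⊗ a ↦ Σ a_{<0>} * θ(c·a_{<-2>} ⊗ d·a_{<-1>})`. -/
def V3aRHS (θ : C ⊗[k] C →ₗ[k] A) : (C ⊗[k] C) ⊗[k] A →ₗ[k] A :=
  (LinearMap.mul' k A) ∘ₗ (TensorProduct.comm k A A).toLinearMap ∘ₗ
    (TensorProduct.map θ LinearMap.id) ∘ₗ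
    (TensorProduct.map D.act2 LinearMap.id) ∘ₗ
    (TensorProduct.assoc k (C ⊗[k] C) (H ⊗[k] H) A).symm.toLinearMap ∘ₗ
    (TensorProduct.map LinearMap.id D.ρ2)

/-- The left-hand side of condition (b) of `V₃`: `c ⊗ d ↦ Σ c_(1) ⊗ θ(c_(2) ⊗ d)`. -/
def V3bLHS (_D : DoiHopfDatum k H A C) (θ : C ⊗[k] C →ₗ[k] A) : C ⊗[k] C →ₗ[k] C ⊗[k] A :=
  (TensorProduct.map LinearMap.id θ) ∘ₗ
    (TensorProduct.assoc k C C C).toLinearMap ∘ₗ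
    (TensorProduct.map (Coalgebra.comul (R := k)) LinearMap.id)

/-- The right-hand side of condition (b) of `V₃`:
`c ⊗ d ↦ Σ d_(2)·θ(c ⊗ d_(1))_{<-1>} ⊗ θ(c ⊗ d_(1))_{<0>}`. -/
def V3bRHS (θ : C ⊗[k] C →ₗ[k] A) : C ⊗[k] C →ₗ[k] C ⊗[k] A :=
  (TensorProduct.map D.actL LinearMap.id) ∘ₗ
    (TensorProduct.assoc k C H A).symm.toLinearMap ∘ₗ
    (TensorProduct.comm k (H ⊗[k] A) C).toLinearMap ∘ₗ
    (TensorProduct.map D.ρ LinearMap.id) ∘ₗ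
    (TensorProduct.map θ LinearMap.id) ∘ₗ
    (TensorProduct.assoc k C C C).symm.toLinearMap ∘ₗ
    (TensorProduct.map LinearMap.id (Coalgebra.comul (R := k)))

/-- `θ : C ⊗ C → A` belongs to `V₃`. -/
def IsV3 (θ : C ⊗[k] C →ₗ[k] A) : Prop :=
  (∀ (c d : C) (a : A), θ (c ⊗ₜ[k] d) * a = D.V3aRHS θ ((c ⊗ₜ[k] d) ⊗ₜ[k] a)) ∧
    D.V3bLHS θ = D.V3bRHS θ

/-- `θ` is normalized: `Σ θ(c_(1) ⊗ c_(2)) = ε(c)1_A`. -/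
def IsNormalizedV3 (_D : DoiHopfDatum k H A C) (θ : C ⊗[k] C →ₗ[k] A) : Prop :=
  ∀ c : C, θ (Coalgebra.comul (R := k) c)
    = algebraMap k A (Coalgebra.counit (R := k) c)

/-- An `A`-integral `γ : C → Hom(C,A)` for the Doi-Hopf datum: its uncurried form
lies in `V₃`. -/
def IsAIntegral (γ : C →ₗ[k] (C →ₗ[k] A)) : Prop :=
  D.IsV3 (TensorProduct.lift γ)

/-- A total `A`-integral: a normalized `A`-integral. -/
def IsTotalAIntegral (γ : C →ₗ[k] (C →ₗ[k] A)) : Prop :=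
  D.IsAIntegral γ ∧ D.IsNormalizedV3 (TensorProduct.lift γ)

end DoiHopfDatum

/-- A right-left Doi-Hopf module over the Doi-Hopf datum `D`: a right `A`-module and
left `C`-comodule `M` satisfying `ρ_M(m·a) = Σ m_{<-1>}·a_{<-1>} ⊗ m_{<0>}·a_{<0>}`. -/
structure DHModule {k H A C : Type*} [CommRing k] [Ring H] [Bialgebra k H]
    [Ring A] [Algebra k A] [AddCommGroup C] [Module k C] [Coalgebra k C]
    (D : DoiHopfDatum k H A C) (M : Type*) [AddCommGroup M] [Module k M] where
  /-- the right `A`-action on `M` -/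
  sm : M →ₗ[k] A →ₗ[k] M
  sm_one : ∀ m : M, sm m 1 = m
  sm_mul : ∀ (m : M) (a b : A), sm (sm m a) b = sm m (a * b)
  /-- the left `C`-coaction `ρ_M : M → C ⊗ M` -/
  cρ : M →ₗ[k] C ⊗[k] M
  cρ_coassoc : ∀ m : M,
    (TensorProduct.assoc k C C M)
        ((TensorProduct.map (Coalgebra.comul (R := k)) LinearMap.id) (cρ m))
      = (TensorProduct.map LinearMap.id cρ) (cρ m)
  cρ_counit : ∀ m : M,
    (TensorProduct.lid k M)
        ((TensorProduct.map (Coalgebra.counit (R := k)) LinearMap.id) (cρ m)) = m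
  compat : ∀ (m : M) (a : A),
    cρ (sm m a)
      = (TensorProduct.map D.actL (TensorProduct.lift sm))
          ((TensorProduct.tensorTensorTensorComm k C M H A)
            (cρ m ⊗ₜ[k] D.ρ a))

namespace DoiHopfDatum

variable {k H A C : Type*} [CommRing k] [Ring H] [Bialgebra k H]
    [Ring A] [Algebra k A] [AddCommGroup C] [Module k C] [Coalgebra k C]
variable (D : DoiHopfDatum k H A C)

/-- The natural transformation attached to `θ : C ⊗ C → A`:
`ν_M (c ⊗ m) = Σ m_{<0>} · θ(c ⊗ m_{<-1>})`. -/
def nuMap (θ : C ⊗[k] C →ₗ[k] A) {M : Type*} [AddCommGroup M] [Module k M]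
    (DM : DHModule D M) : C ⊗[k] M →ₗ[k] M :=
  (TensorProduct.lift DM.sm) ∘ₗ (TensorProduct.comm k A M).toLinearMap ∘ₗ
    (TensorProduct.map θ LinearMap.id) ∘ₗ
    (TensorProduct.assoc k C C M).symm.toLinearMap ∘ₗ
    (TensorProduct.map LinearMap.id DM.cρ)

/-- The right `A`-action on `C ⊗ M`: `(c ⊗ m) · a = Σ c·a_{<-1>} ⊗ m·a_{<0>}`. -/
def actCM {M : Type*} [AddCommGroup M] [Module k M] (DM : DHModule D M) :
    (C ⊗[k] M) ⊗[k] A →ₗ[k] C ⊗[k] M :=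
  (TensorProduct.map D.actL (TensorProduct.lift DM.sm)) ∘ₗ
    (TensorProduct.tensorTensorTensorComm k C M H A).toLinearMap ∘ₗ
    (TensorProduct.map LinearMap.id D.ρ)

end DoiHopfDatum

namespace DoiHopfDatum

variable {k H A C : Type*} [CommRing k] [Ring H] [Bialgebra k H]
    [Ring A] [Algebra k A] [AddCommGroup C] [Module k C] [Coalgebra k C]

/-- The left `A`-action on `Hom(C,A)`: `(a·f)(c) = Σ a_{<0>}·f(c·a_{<-1>})`. -/
def lActHom (D : DoiHopfDatum k H A C) (a : A) (f : C →ₗ[k] A) : C →ₗ[k] A :=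
  (LinearMap.mul' k A) ∘ₗ (TensorProduct.comm k A A).toLinearMap ∘ₗ
    (TensorProduct.map (f ∘ₗ D.actL) LinearMap.id) ∘ₗ
    (TensorProduct.assoc k C H A).symm.toLinearMap ∘ₗ
    ((TensorProduct.mk k C (H ⊗[k] A)).flip (D.ρ a))

/-- The right `A`-action on `Hom(C,A)`: `(f·a)(c) = f(c)·a`. -/
def rActHom (_D : DoiHopfDatum k H A C) (a : A) (f : C →ₗ[k] A) : C →ₗ[k] A :=
  (LinearMap.mulRight k a) ∘ₗ f

/-- The left `A`-action on `C ⊗ A`: `a·(c ⊗ b) = c ⊗ a·b`. -/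
def lActCA (_D : DoiHopfDatum k H A C) (a : A) : C ⊗[k] A →ₗ[k] C ⊗[k] A :=
  TensorProduct.map LinearMap.id (LinearMap.mulLeft k a)

/-- `ψ : C ⊗ A → Hom(C,A)` belongs to `V₅`: it is an `A`-bimodule map satisfying
`Σ c_(1) ⊗ ψ(c_(2)⊗1)(d) = Σ d_(2)·ψ(c⊗1)(d_(1))_{<-1>} ⊗ ψ(c⊗1)(d_(1))_{<0>}`. -/
def IsV5 (D : DoiHopfDatum k H A C) (ψ : C ⊗[k] A →ₗ[k] (C →ₗ[k] A)) : Prop :=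
  (∀ (a : A) (x : C ⊗[k] A), ψ (D.lActCA a x) = D.lActHom a (ψ x)) ∧
  (∀ (a : A) (x : C ⊗[k] A), ψ (D.rActCA (x ⊗ₜ[k] a)) = D.rActHom a (ψ x)) ∧
  D.V3bLHS (TensorProduct.lift (ψ ∘ₗ ((TensorProduct.mk k C A).flip 1)))
    = D.V3bRHS (TensorProduct.lift (ψ ∘ₗ ((TensorProduct.mk k C A).flip 1)))

/-- `ψ ∈ V₅` is normalized if `Σ ψ(c_(1) ⊗ 1)(c_(2)) = ε(c)1_A`. -/
def IsNormalizedV5 (D : DoiHopfDatum k H A C)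
    (ψ : C ⊗[k] A →ₗ[k] (C →ₗ[k] A)) : Prop :=
  D.IsNormalizedV3 (TensorProduct.lift (ψ ∘ₗ ((TensorProduct.mk k C A).flip 1)))

/-- Auxiliary map `(c ⊗ a) ⊗ d ↦ Σ a_{<0>} γ(c)(d·a_{<-1>}) = (a·γ(c))(d)`. -/
def psiAux (D : DoiHopfDatum k H A C) (γ : C →ₗ[k] (C →ₗ[k] A)) :
    (C ⊗[k] A) ⊗[k] C →ₗ[k] A :=
  (LinearMap.mul' k A) ∘ₗ (TensorProduct.comm k A A).toLinearMap ∘ₗ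
    (TensorProduct.map (TensorProduct.lift γ) LinearMap.id) ∘ₗ
    (TensorProduct.map (TensorProduct.comm k C C).toLinearMap LinearMap.id) ∘ₗ
    (TensorProduct.assoc k C C A).symm.toLinearMap ∘ₗ
    (TensorProduct.map D.actL LinearMap.id) ∘ₗ
    (TensorProduct.tensorTensorTensorComm k C C H A).toLinearMap ∘ₗ
    (TensorProduct.assoc k C C (H ⊗[k] A)).symm.toLinearMap ∘ₗ
    (TensorProduct.comm k (C ⊗[k] (H ⊗[k] A)) C).toLinearMap ∘ₗ
    (TensorProduct.map (TensorProduct.map LinearMap.id D.ρ) LinearMap.id)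

/-- The assignment `γ ↦ ψ_γ`, `ψ_γ(c ⊗ a) = a·γ(c)`. -/
def toV5 (D : DoiHopfDatum k H A C) (γ : C →ₗ[k] (C →ₗ[k] A)) :
    C ⊗[k] A →ₗ[k] (C →ₗ[k] A) :=
  TensorProduct.curry (D.psiAux γ)

/-- The assignment `ψ ↦ γ_ψ`, `γ_ψ(c) = ψ(c ⊗ 1)`. -/
def toV4 (_D : DoiHopfDatum k H A C) (ψ : C ⊗[k] A →ₗ[k] (C →ₗ[k] A)) :
    C →ₗ[k] (C →ₗ[k] A) :=
  ψ ∘ₗ ((TensorProduct.mk k C A).flip 1)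

end DoiHopfDatum

namespace DoiHopfDatum

section

variable {k H A C : Type*} [CommRing k] [Ring H] [Bialgebra k H]
    [Ring A] [Algebra k A] [AddCommGroup C] [Module k C] [Coalgebra k C]
variable (D : DoiHopfDatum k H A C)

/-- The map `h ⊗ a ↦ a * f (d·h)`, through which `lActHom` factors: evaluating it at `ρ a` gives
`(a·f)(d)`. Identities between sums over `ρ a` are proved by replacing `ρ a` by a pure tensor. -/
def evalHA (f : C →ₗ[k] A) (d : C) : H ⊗[k] A →ₗ[k] A :=
  TensorProduct.lift ((LinearMap.mul k A).flip ∘ₗ f ∘ₗ D.act d)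

@[simp] lemma evalHA_tmul (f : C →ₗ[k] A) (d : C) (h : H) (a : A) :
    D.evalHA f d (h ⊗ₜ a) = a * f (D.act d h) := rfl

lemma actL_tmul (c : C) (h : H) : D.actL (c ⊗ₜ h) = D.act c h := rfl

lemma lActHom_apply (a : A) (f : C →ₗ[k] A) (d : C) :
    D.lActHom a f d = D.evalHA f d (D.ρ a) := by
  simp only [lActHom, LinearMap.comp_apply, LinearMap.flip_apply, TensorProduct.mk_apply,
    LinearEquiv.coe_coe]
  induction D.ρ a using TensorProduct.induction_on with
  | zero => simp
  | tmul h a => simp [actL_tmul]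
  | add x y hx hy => simp only [TensorProduct.tmul_add, map_add, hx, hy]

lemma lActHom_add (a : A) (f g : C →ₗ[k] A) :
    D.lActHom a (f + g) = D.lActHom a f + D.lActHom a g := by
  ext d
  simp only [lActHom_apply, LinearMap.add_apply]
  induction D.ρ a using TensorProduct.induction_on with
  | zero => simp
  | tmul h a => simp [mul_add]
  | add x y hx hy => simp only [map_add, hx, hy]; abel

lemma lActHom_zero (a : A) : D.lActHom a (0 : C →ₗ[k] A) = 0 := by
  simpa using D.lActHom_add a 0 0

lemma lActHom_one (f : C →ₗ[k] A) : D.lActHom 1 f = f := by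
  ext d
  simp [lActHom_apply, D.ρ_one, Algebra.TensorProduct.one_def, D.act_one]

lemma lActHom_mul (a b : A) (f : C →ₗ[k] A) :
    D.lActHom (a * b) f = D.lActHom a (D.lActHom b f) := by
  ext d
  rw [lActHom_apply, lActHom_apply, D.ρ_mul]
  induction D.ρ a using TensorProduct.induction_on with
  | zero => simp
  | tmul h a =>
    rw [evalHA_tmul, lActHom_apply]
    induction D.ρ b using TensorProduct.induction_on with
    | zero => simp
    | tmul g b => simp [D.act_mul, mul_assoc]
    | add x y hx hy => simp only [mul_add, map_add, hx, hy]
  | add x y hx hy => simp only [add_mul, map_add, hx, hy]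

lemma lActHom_rActHom (a b : A) (f : C →ₗ[k] A) :
    D.lActHom a (D.rActHom b f) = D.rActHom b (D.lActHom a f) := by
  ext d
  simp only [lActHom_apply, rActHom, LinearMap.comp_apply, LinearMap.mulRight_apply]
  induction D.ρ a using TensorProduct.induction_on with
  | zero => simp
  | tmul h a => simp [mul_assoc]
  | add x y hx hy => simp only [map_add, hx, hy, add_mul]

lemma toV5_tmul (γ : C →ₗ[k] (C →ₗ[k] A)) (c : C) (a : A) :
    D.toV5 γ (c ⊗ₜ a) = D.lActHom a (γ c) := by
  ext d
  rw [lActHom_apply]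
  simp only [toV5, psiAux, TensorProduct.curry_apply, LinearMap.comp_apply,
    TensorProduct.map_tmul, LinearEquiv.coe_coe, LinearMap.id_apply]
  induction D.ρ a using TensorProduct.induction_on with
  | zero => simp
  | tmul h a => simp [actL_tmul]
  | add x y hx hy =>
    simp only [TensorProduct.tmul_add, TensorProduct.add_tmul, map_add, hx, hy]

lemma toV4_apply (ψ : C ⊗[k] A →ₗ[k] (C →ₗ[k] A)) (c : C) : D.toV4 ψ c = ψ (c ⊗ₜ 1) := rfl

lemma toV4_toV5 (γ : C →ₗ[k] (C →ₗ[k] A)) : D.toV4 (D.toV5 γ) = γ :=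
  LinearMap.ext fun c => by rw [toV4_apply, toV5_tmul, lActHom_one]

/-- The right-hand side of condition (a) is `ψ_γ((c ⊗ 1)·a)(d)`, so (a) is right linearity of
`ψ_γ` on the elements `c ⊗ 1`. -/
lemma toV5_rActCA (γ : C →ₗ[k] (C →ₗ[k] A)) (c d : C) (a : A) :
    D.toV5 γ (D.rActCA ((c ⊗ₜ 1) ⊗ₜ a)) d
      = D.V3aRHS (TensorProduct.lift γ) ((c ⊗ₜ d) ⊗ₜ a) := by
  simp only [rActCA, V3aRHS, ρ2, LinearMap.comp_apply, TensorProduct.map_tmul,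
    LinearEquiv.coe_coe, LinearMap.id_apply]
  induction D.ρ a using TensorProduct.induction_on with
  | zero => simp
  | tmul h a =>
    simp only [TensorProduct.tensorTensorTensorComm_tmul, TensorProduct.map_tmul, actL_tmul,
      LinearMap.mul'_apply, one_mul, LinearMap.id_apply, toV5_tmul, lActHom_apply]
    induction D.ρ a using TensorProduct.induction_on with
    | zero => simp
    | tmul g a => simp [act2, actL_tmul]
    | add x y hx hy => simp only [TensorProduct.tmul_add, map_add, hx, hy]
  | add x y hx hy =>
    simp only [TensorProduct.tmul_add, map_add, LinearMap.add_apply, hx, hy]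

lemma toV5_lActCA (γ : C →ₗ[k] (C →ₗ[k] A)) (a : A) (x : C ⊗[k] A) :
    D.toV5 γ (D.lActCA a x) = D.lActHom a (D.toV5 γ x) := by
  induction x using TensorProduct.induction_on with
  | zero => simp [lActHom_zero]
  | tmul c b =>
    simp only [lActCA, TensorProduct.map_tmul, LinearMap.id_apply, LinearMap.mulLeft_apply,
      toV5_tmul, lActHom_mul]
  | add x y hx hy => simp only [map_add, lActHom_add, hx, hy]

lemma lActCA_one_tmul (c : C) (b : A) : D.lActCA b (c ⊗ₜ 1) = c ⊗ₜ b := by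
  simp [lActCA]

lemma rActCA_lActCA (b : A) (x : C ⊗[k] A) (a : A) :
    D.rActCA (D.lActCA b x ⊗ₜ a) = D.lActCA b (D.rActCA (x ⊗ₜ a)) := by
  simp only [rActCA, LinearMap.comp_apply, TensorProduct.map_tmul, LinearEquiv.coe_coe,
    LinearMap.id_apply]
  induction D.ρ a using TensorProduct.induction_on with
  | zero => simp
  | tmul h a =>
    induction x using TensorProduct.induction_on with
    | zero => simp
    | tmul c b' => simp [lActCA, mul_assoc]
    | add x y hx hy => simp only [TensorProduct.add_tmul, map_add, hx, hy]
  | add x y hx hy => simp only [TensorProduct.tmul_add, map_add, hx, hy]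

lemma IsAIntegral.isV5 {γ : C →ₗ[k] (C →ₗ[k] A)} (hγ : D.IsAIntegral γ) :
    D.IsV5 (D.toV5 γ) := by
  refine ⟨D.toV5_lActCA γ, fun a x => ?_, ?_⟩
  · induction x using TensorProduct.induction_on with
    | zero => simp [rActHom]
    | tmul c b =>
      have h : D.toV5 γ (D.rActCA ((c ⊗ₜ 1) ⊗ₜ a)) = D.rActHom a (γ c) :=
        LinearMap.ext fun d => (D.toV5_rActCA γ c d a).trans (hγ.1 c d a).symm
      rw [← D.lActCA_one_tmul c b, rActCA_lActCA, toV5_lActCA, h, lActHom_rActHom,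
        lActCA_one_tmul, toV5_tmul]
    | add x y hx hy =>
      simp only [TensorProduct.add_tmul, map_add, hx, hy, rActHom, LinearMap.comp_add]
  · change D.V3bLHS (TensorProduct.lift (D.toV4 (D.toV5 γ)))
      = D.V3bRHS (TensorProduct.lift (D.toV4 (D.toV5 γ)))
    rw [toV4_toV5]
    exact hγ.2

lemma IsV5.toV5_toV4 {ψ : C ⊗[k] A →ₗ[k] (C →ₗ[k] A)} (hψ : D.IsV5 ψ) :
    D.toV5 (D.toV4 ψ) = ψ :=
  TensorProduct.ext' fun c a => by
    rw [toV5_tmul, toV4_apply, ← hψ.1, lActCA_one_tmul]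

lemma IsV5.isAIntegral {ψ : C ⊗[k] A →ₗ[k] (C →ₗ[k] A)} (hψ : D.IsV5 ψ) :
    D.IsAIntegral (D.toV4 ψ) := by
  refine ⟨fun c d a => ?_, hψ.2.2⟩
  rw [← toV5_rActCA, IsV5.toV5_toV4 D hψ, hψ.2.1]
  rfl

end

end DoiHopfDatum

/-- the assignments `γ ↦ ψ_γ` (with `ψ_γ(c⊗a) = a·γ(c)`) and
`ψ ↦ γ_ψ` (with `γ_ψ(c) = ψ(c⊗1)`) are mutually inverse bijections between the set
`V₄` of `A`-integrals and the set `V₅`; moreover `γ` is total iff `ψ_γ` is normalized. -/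
theorem V4_V5_bijection
    {k H A C : Type*} [CommRing k] [Ring H] [Bialgebra k H]
    [Ring A] [Algebra k A] [AddCommGroup C] [Module k C] [Coalgebra k C]
    (D : DoiHopfDatum k H A C) :
    (∀ γ : C →ₗ[k] (C →ₗ[k] A), D.IsAIntegral γ → D.IsV5 (D.toV5 γ)) ∧
    (∀ ψ : C ⊗[k] A →ₗ[k] (C →ₗ[k] A), D.IsV5 ψ → D.IsAIntegral (D.toV4 ψ)) ∧
    (∀ γ : C →ₗ[k] (C →ₗ[k] A), D.IsAIntegral γ → D.toV4 (D.toV5 γ) = γ) ∧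
    (∀ ψ : C ⊗[k] A →ₗ[k] (C →ₗ[k] A), D.IsV5 ψ → D.toV5 (D.toV4 ψ) = ψ) ∧
    (∀ γ : C →ₗ[k] (C →ₗ[k] A), D.IsAIntegral γ →
      (D.IsNormalizedV3 (TensorProduct.lift γ) ↔ D.IsNormalizedV5 (D.toV5 γ))) := by
  exact ⟨fun _ h => h.isV5, fun _ h => h.isAIntegral, fun γ _ => D.toV4_toV5 γ,
    fun _ h => h.toV5_toV4, fun γ _ => by
      change _ ↔ D.IsNormalizedV3 (TensorProduct.lift (D.toV4 (D.toV5 γ)))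
      rw [DoiHopfDatum.toV4_toV5]⟩
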